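/- Let (G,*) be a left quasigroup satisfying condition (5.1), (L,·) a left quasigroup, and π : L → G a bijection. Let M be either the ternary system (G, μ^G_1) with μ^G_1(a,b,c) = a*(b\c) or the ternary system (G, μ^G_2) with μ^G_2(a,b,c) = c*(b\a). Then the dynamical Yang–Baxter map R^{(L,M,π)}(λ) satisfies the unitary condition R^{(L,M,π)}(λ) ∘ P ∘ R^{(L,M,π)}(λ) = P for all λ ∈ L (where P(u,v) = (v,u)) if and only if (a*b)*c = (a*c)*b for all a,b,c ∈ G. -/

import Mathlib

/-- Condition (5.1) on a left quasigroup: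
(a*c)\((a*b)*c) = (a'*c)\((a'*b)*c) for all a, a', b, c. -/
def Cond51 {G : Type*} (gm gld : G → G → G) : Prop :=
  ∀ a a' b c : G,
    gld (gm a c) (gm (gm a b) c) = gld (gm a' c) (gm (gm a' b) c)

/-- ξ_λ(u)(v) = λ\π⁻¹(μ(π(λ), π(λ·u), π((λ·u)·v))). -/
def xiMap {L M : Type*} (mul ld : L → L → L) (μ : M → M → M → M) (π : L ≃ M)
    (lam u v : L) : L :=
  ld lam (π.symm (μ (π lam) (π (mul lam u)) (π (mul (mul lam u) v))))

/-- R^{(L,M,π)}(λ)(u,v) = ((λ·ξ_λ(u)(v))\((λ·u)·v), ξ_λ(u)(v)). -/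
def Rmap {L M : Type*} (mul ld : L → L → L) (μ : M → M → M → M) (π : L ≃ M)
    (lam : L) (p : L × L) : L × L :=
  (ld (mul lam (xiMap mul ld μ π lam p.1 p.2)) (mul (mul lam p.1) p.2),
    xiMap mul ld μ π lam p.1 p.2)

/-! A pair `(u, v)` is the path from `λ` through `λ·u` to `(λ·u)·v`. Labelling the two points it
visits by `M` turns `P ∘ R(λ)` into the map `(b, c) ↦ (μ(π(λ), b, c), c)`, which moves the midpoint
of the path and fixes its end. Since `P² = 1`, the unitary condition says that `P ∘ R(λ)` is an
involution, so it amounts to `μ(a, μ(a, b, c), c) = b`. For `μ = μ^G_1` the substitution `b = a*x`,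
`c = (a*x)*y` turns this into `(a*x)*y = (a*y)*x`, and `μ^G_2` is `μ^G_1` with its outer arguments
exchanged. -/

/-- A left quasigroup, as a property of the multiplication `mul` and the left division `ld`:
`ld u` is the two-sided inverse of `mul u`. -/
structure IsLeftQuasigroup {G : Type*} (mul ld : G → G → G) : Prop where
  mul_ldiv : ∀ u w, mul u (ld u w) = w
  ldiv_mul : ∀ u v, ld u (mul u v) = v

/-- The unitary condition `R(λ) ∘ P ∘ R(λ) = P` for all `λ`, where `P` is `Prod.swap`. -/
def IsUnitary {L : Type*} (R : L → L × L → L × L) : Prop :=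
  ∀ lam, R lam ∘ Prod.swap ∘ R lam = Prod.swap

theorem comp_swap_comp_eq_swap_iff_involutive {X : Type*} (R : X × X → X × X) :
    R ∘ Prod.swap ∘ R = Prod.swap ↔ Function.Involutive (Prod.swap ∘ R) := by
  simp only [funext_iff, Function.Involutive, Function.comp_apply, Prod.swap_eq_iff_eq_swap]

theorem involutive_iff_of_semiconj {X Y : Type*} {e : X ≃ Y} {f : X → X} {g : Y → Y}
    (h : Function.Semiconj e f g) : Function.Involutive f ↔ Function.Involutive g := by
  simp only [Function.Involutive, e.surjective.forall, ← h.eq, e.injective.eq_iff]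

namespace IsLeftQuasigroup

section Division

variable {G : Type*} {mul ld : G → G → G}

theorem mul_left_surjective (h : IsLeftQuasigroup mul ld) (u : G) : Function.Surjective (mul u) :=
  fun w => ⟨ld u w, h.mul_ldiv u w⟩

theorem mul_left_injective (h : IsLeftQuasigroup mul ld) (u : G) : Function.Injective (mul u) :=
  Function.LeftInverse.injective (h.ldiv_mul u)

theorem ldiv_eq_iff (h : IsLeftQuasigroup mul ld) {u v w : G} : ld u w = v ↔ w = mul u v := by
  rw [← (h.mul_left_injective u).eq_iff, h.mul_ldiv]

theorem forall_mul_ldiv_eq_iff_right_comm (h : IsLeftQuasigroup mul ld) (a : G) :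
    (∀ b c, mul a (ld (mul a (ld b c)) c) = b) ↔
      ∀ x y, mul (mul a x) y = mul (mul a y) x :=
  calc
    _ ↔ ∀ x y, mul a (ld (mul a (ld (mul a x) (mul (mul a x) y))) (mul (mul a x) y)) = mul a x :=
      (h.mul_left_surjective a).forall.trans <|
        forall_congr' fun x => (h.mul_left_surjective (mul a x)).forall
    _ ↔ ∀ x y, ld (mul a y) (mul (mul a x) y) = x := by
      simp only [h.ldiv_mul, (h.mul_left_injective a).eq_iff]
    _ ↔ _ := by simp only [h.ldiv_eq_iff]

end Division

section YangBaxterMap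

variable {L M : Type*} {mul ld : L → L → L}

/-- The coordinates `(π(λ·u), π((λ·u)·v))` of `(u, v)`: the labels of the two points visited by
the path that starts at `λ` and multiplies on the right by `u` and then by `v`. -/
def pathEquiv (h : IsLeftQuasigroup mul ld) (π : L ≃ M) (lam : L) : L × L ≃ M × M where
  toFun p := (π (mul lam p.1), π (mul (mul lam p.1) p.2))
  invFun q := (ld lam (π.symm q.1), ld (π.symm q.1) (π.symm q.2))
  left_inv p := by simp only [Equiv.symm_apply_apply, h.ldiv_mul]
  right_inv q := by simp only [h.mul_ldiv, Equiv.apply_symm_apply]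

theorem semiconj_pathEquiv (h : IsLeftQuasigroup mul ld) (μ : M → M → M → M) (π : L ≃ M)
    (lam : L) :
    Function.Semiconj (h.pathEquiv π lam) (Prod.swap ∘ Rmap mul ld μ π lam)
      (fun q => (μ (π lam) q.1 q.2, q.2)) := fun p => by
  simp only [Function.comp_apply, Rmap, xiMap, Prod.swap_prod_mk, pathEquiv, Equiv.coe_fn_mk,
    h.mul_ldiv, Equiv.apply_symm_apply]

theorem involutive_swap_comp_Rmap_iff (h : IsLeftQuasigroup mul ld) (μ : M → M → M → M)
    (π : L ≃ M) (lam : L) :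
    Function.Involutive (Prod.swap ∘ Rmap mul ld μ π lam) ↔
      ∀ b c, μ (π lam) (μ (π lam) b c) c = b :=
  (involutive_iff_of_semiconj (h.semiconj_pathEquiv μ π lam)).trans <| by
    simp only [Function.Involutive, Prod.forall, Prod.mk.injEq, and_true]

theorem isUnitary_Rmap_iff (h : IsLeftQuasigroup mul ld) (μ : M → M → M → M) (π : L ≃ M) :
    IsUnitary (Rmap mul ld μ π) ↔ ∀ a b c, μ a (μ a b c) c = b := by
  simp only [IsUnitary, comp_swap_comp_eq_swap_iff_involutive, h.involutive_swap_comp_Rmap_iff,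
    π.surjective.forall]

end YangBaxterMap

end IsLeftQuasigroup

theorem unitary_iff_muG1_muG2_general {G L : Type*} {gm gld : G → G → G} {mul ld : L → L → L}
    (hG : IsLeftQuasigroup gm gld) (hL : IsLeftQuasigroup mul ld) (π : L ≃ G) :
    (IsUnitary (Rmap mul ld (fun a b c => gm a (gld b c)) π) ↔
      ∀ a b c, gm (gm a b) c = gm (gm a c) b) ∧
    (IsUnitary (Rmap mul ld (fun a b c => gm c (gld b a)) π) ↔
      ∀ a b c, gm (gm a b) c = gm (gm a c) b) := by
  have muG1_iff : (∀ a b c, gm a (gld (gm a (gld b c)) c) = b) ↔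
      ∀ a b c, gm (gm a b) c = gm (gm a c) b :=
    forall_congr' hG.forall_mul_ldiv_eq_iff_right_comm
  have muG2_iff_muG1 : (∀ a b c, gm c (gld (gm c (gld b a)) a) = b) ↔
      ∀ a b c, gm a (gld (gm a (gld b c)) c) = b :=
    ⟨fun h a b c => h c b a, fun h a b c => h c b a⟩
  exact ⟨(hL.isUnitary_Rmap_iff _ π).trans muG1_iff,
    (hL.isUnitary_Rmap_iff _ π).trans (muG2_iff_muG1.trans muG1_iff)⟩

/-- for M = (G, μ^G_1) with μ^G_1(a,b,c) = a*(b\c), or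
M = (G, μ^G_2) with μ^G_2(a,b,c) = c*(b\a), the dynamical YB map R^{(L,M,π)}(λ)
satisfies the unitary condition iff (a*b)*c = (a*c)*b for all a,b,c ∈ G. -/
theorem unitary_iff_muG1_muG2 {G L : Type*} [Nonempty G] [Nonempty L]
    (gm gld : G → G → G)
    (hgm : ∀ u w : G, gm u (gld u w) = w)
    (hgld : ∀ u v : G, gld u (gm u v) = v)
    (h51 : Cond51 gm gld)
    (mul ld : L → L → L)
    (hmul : ∀ u w : L, mul u (ld u w) = w)
    (hld : ∀ u v : L, ld u (mul u v) = v)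
    (π : L ≃ G) :
    ((∀ lam : L,
        Rmap mul ld (fun a b c => gm a (gld b c)) π lam ∘ Prod.swap ∘
            Rmap mul ld (fun a b c => gm a (gld b c)) π lam = Prod.swap) ↔
      (∀ a b c : G, gm (gm a b) c = gm (gm a c) b)) ∧
    ((∀ lam : L,
        Rmap mul ld (fun a b c => gm c (gld b a)) π lam ∘ Prod.swap ∘
            Rmap mul ld (fun a b c => gm c (gld b a)) π lam = Prod.swap) ↔
      (∀ a b c : G, gm (gm a b) c = gm (gm a c) b)) :=
  unitary_iff_muG1_muG2_general ⟨hgm, hgld⟩ ⟨hmul, hld⟩ π
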